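/- arXiv:2512.16116 — 2 statements merged into one kernel-verified Lean document; each statement's English description precedes it below -/
import Mathlib

section
/- Let (G,·,∘,⊳) be a post-brace with sub-adjacent brace (G,·,∗), a ∗ b = a ∘ (a ⊳ b). Define R₁(a,b) = (a⁻¹ · (a ∘ b), (a⁻¹ · (a ∘ b))‾ ∘ a ∘ b) and R₂(a,b) = (a⁻¹ · (a ∗ b), (a⁻¹ · (a ∗ b))† ∗ a ∗ b), where x⁻¹ is the inverse in (G,·), x̄ is the inverse in (G,∘), and x† = (L⊳_x)⁻¹(x̄) is the inverse in (G,∗). Then R₁ and R₂ are non-degenerate involutive set-theoretical solutions of the Yang-Baxter equation on G, and R₁ is Drinfel'd isomorphic to R₂ via the bijection ω̄ : G × G → G × G given by ω̄(a,b) = (a, (L▸_a)⁻¹(a⁻¹ · (a ∘ b))), where a ▸ b := a⁻¹ · (a ∗ b); i.e. ω̄ ∘ R₁ = R₂ ∘ ω̄. -/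
/-!
In a brace, written additively for the abelian group and multiplicatively for the other one, put
`λ_a b = -a + a * b`. The solution attached to the brace sends `(a, b)` to the pair `(x, y)` with
`x = λ_a b` and `x * y = a * b`, and commutativity of addition gives `λ_x y = -x + a * b = a`. So
in the coordinates `(a, λ_a b)` the solution is the flip, and in particular involutive. Since `λ`
is a homomorphism, the coordinates `(a, λ_a b, λ_a (λ_b c))` turn both of its actions on triples
into the flips of adjacent entries as well; hence the braid relation, which the flips satisfy.
Right non-degeneracy is read off the closed formula `y = (a⁻¹ + b)⁻¹ * b`.

The solutions of any two braces on equipotent sets are therefore conjugate to the same flip, and a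
change of coordinates intertwines them. In a post-brace this applies to the brace and its
sub-adjacent brace.
-/

structure IsGroup {G : Type*} (op : G → G → G) (e : G) (inv : G → G) : Prop where
  assoc : ∀ a b c, op (op a b) c = op a (op b c)
  one_op : ∀ a, op e a = a
  op_one : ∀ a, op a e = a
  inv_op : ∀ a, op (inv a) a = e
  op_inv : ∀ a, op a (inv a) = e

/-- A brace: an abelian group `(G, mul)` and a group `(G, circ)` with the compatibility
`a ∘ (b · c) = (a ∘ b) · a⁻¹ · (a ∘ c)`. -/
structure IsBrace {G : Type*} (mul : G → G → G) (e : G) (inv : G → G)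
    (circ : G → G → G) (ce : G) (cinv : G → G) : Prop where
  mul_group : IsGroup mul e inv
  mul_comm : ∀ a b, mul a b = mul b a
  circ_group : IsGroup circ ce cinv
  compat : ∀ a b c, circ a (mul b c) = mul (mul (circ a b) (inv a)) (circ a c)

/-- A homomorphism of braces preserves both operations. -/
def IsBraceHom {G H : Type*} (mulG circG : G → G → G) (mulH circH : H → H → H)
    (f : G → H) : Prop :=
  (∀ a b, f (mulG a b) = mulH (f a) (f b)) ∧ (∀ a b, f (circG a b) = circH (f a) (f b))

/-- A brace automorphism: a bijective self-homomorphism. -/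
def IsBraceAut {H : Type*} (mulH circH : H → H → H) (f : H → H) : Prop :=
  Function.Bijective f ∧ IsBraceHom mulH circH mulH circH f

/-- A semi-trivial action of the brace `G` on the brace `H`: each `Φ a` is a brace
automorphism of `H` and `Φ (a ∘ b) = Φ a ∘ Φ b`. -/
def IsSemiTrivialAction {G H : Type*} (circG : G → G → G)
    (mulH circH : H → H → H) (Φ : G → H → H) : Prop :=
  (∀ a, IsBraceAut mulH circH (Φ a)) ∧ (∀ a b h, Φ (circG a b) h = Φ a (Φ b h))

/-- A relative Rota-Baxter operator on the brace `G` with respect to the semi-trivial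
action `Φ` of `G` on `H`. -/
def IsRelRBO {G H : Type*} (mulG circG : G → G → G) (mulH circH : H → H → H)
    (Φ : G → H → H) (B : H → G) : Prop :=
  (∀ h k, mulG (B h) (B k) = B (mulH h k)) ∧
  (∀ h k, circG (B h) (B k) = B (circH h (Φ (B h) k)))

/-- An enhanced relative Rota-Baxter operator. -/
def IsEnhancedRelRBO {G H : Type*} (mulG circG : G → G → G) (mulH circH : H → H → H)
    (Φ : G → H → H) (B : H → G) : Prop :=
  (∀ h k, mulG (B h) (B k) = B (mulH h k)) ∧
  (∀ (a : G) (h k : H), circG (mulG (B h) a) (B k)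
      = mulG (B (circH h (Φ (mulG (B h) a) k))) a)

/-- A post-group: a group `(G, circ)` with an operation `tri` such that each left
multiplication `tri a` is an automorphism of `(G, circ)` and the weighted associativity
`(a ∘ (a ⊳ b)) ⊳ c = a ⊳ (b ⊳ c)` holds. -/
structure IsPostGroup {G : Type*} (circ : G → G → G) (ce : G) (cinv : G → G)
    (tri : G → G → G) : Prop where
  circ_group : IsGroup circ ce cinv
  tri_bij : ∀ a, Function.Bijective (tri a)
  tri_circ : ∀ a b c, tri a (circ b c) = circ (tri a b) (tri a c)
  weighted : ∀ a b c, tri (circ a (tri a b)) c = tri a (tri b c)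

/-- A post-brace: a brace `(G, mul, circ)` with `tri` making `(G, circ, tri)` a post-group
and `a ⊳ (b · c) = (a ⊳ b) · (a ⊳ c)`. -/
structure IsPostBrace {G : Type*} (mul : G → G → G) (e : G) (inv : G → G)
    (circ : G → G → G) (ce : G) (cinv : G → G) (tri : G → G → G) : Prop where
  brace : IsBrace mul e inv circ ce cinv
  post : IsPostGroup circ ce cinv tri
  tri_mul : ∀ a b c, tri a (mul b c) = mul (tri a b) (tri a c)

/-- A two-sided brace. -/
def IsTwoSidedBrace {G : Type*} (mul : G → G → G) (e : G) (inv : G → G)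
    (circ : G → G → G) (ce : G) (cinv : G → G) : Prop :=
  IsBrace mul e inv circ ce cinv ∧
  ∀ a b c, circ (mul a b) c = mul (mul (circ a c) (inv c)) (circ b c)

/-- The adjoint action of the `circ`-group: `Ad∘_a(b) = a ∘ b ∘ ā`. -/
def adC {G : Type*} (circ : G → G → G) (cinv : G → G) (a b : G) : G :=
  circ (circ a b) (cinv a)

/-- A Rota-Baxter operator on a two-sided brace (w.r.t. the adjoint semi-trivial action). -/
def IsRBTwoSided {G : Type*} (mul circ : G → G → G) (cinv : G → G) (B : G → G) : Prop :=
  (∀ a b, mul (B a) (B b) = B (mul a b)) ∧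
  (∀ a b, circ (B a) (B b) = B (circ a (adC circ cinv (B a) b)))

/-- An enhanced Rota-Baxter operator on a two-sided brace. -/
def IsEnhancedRBTwoSided {G : Type*} (mul circ : G → G → G) (cinv : G → G)
    (B : G → G) : Prop :=
  IsRBTwoSided mul circ cinv B ∧
  ∀ a b x, circ (mul (B a) x) (B b)
      = mul (B (circ a (adC circ cinv (mul (B a) x) b))) x

/-- `R × Id` on `X × X × X`. -/
def YB12 {X : Type*} (R : X × X → X × X) : X × X × X → X × X × X :=
  fun p => ((R (p.1, p.2.1)).1, (R (p.1, p.2.1)).2, p.2.2)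

/-- `Id × R` on `X × X × X`. -/
def YB23 {X : Type*} (R : X × X → X × X) : X × X × X → X × X × X :=
  fun p => (p.1, R p.2)

/-- A set-theoretical solution of the Yang-Baxter equation. -/
def IsYBSolution {X : Type*} (R : X × X → X × X) : Prop :=
  Function.Bijective R ∧
  YB12 R ∘ YB23 R ∘ YB12 R = YB23 R ∘ YB12 R ∘ YB23 R

/-- Non-degeneracy of a solution `R (a, b) = (φ_a b, ψ_b a)`. -/
def IsNonDegenerate {X : Type*} (R : X × X → X × X) : Prop :=
  (∀ a, Function.Bijective fun b => (R (a, b)).1) ∧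
  (∀ b, Function.Bijective fun a => (R (a, b)).2)

/-- Involutivity of a solution: `R ∘ R = Id`. -/
def IsInvolutiveSol {X : Type*} (R : X × X → X × X) : Prop :=
  ∀ p, R (R p) = p

/-- A matched pair of groups `(G, H, σ)` with `σ (a, h) = (r a h, l a h)`. -/
def IsMatchedPairOfGroups {G H : Type*} (opG : G → G → G) (eG : G)
    (opH : H → H → H) (eH : H) (r : G → H → H) (l : G → H → G) : Prop :=
  (∀ h, r eG h = h) ∧
  (∀ a b h, r a (r b h) = r (opG a b) h) ∧
  (∀ a b h, l (opG a b) h = opG (l a (r b h)) (l b h)) ∧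
  (∀ a, l a eH = a) ∧
  (∀ a h k, l (l a h) k = l a (opH h k)) ∧
  (∀ a h k, r a (opH h k) = opH (r a h) (r (l a h) k))

/-- A left ideal of the brace with multiplication `op` (with unit `u`) and second
operation `cop`: a subgroup of the `op`-group such that `p⁻¹ op (p cop x) ∈ S`
(expressed via the unique solution `r` of `op p r = cop p x`). -/
def IsLeftIdealOf {P : Type*} (op : P → P → P) (u : P) (cop : P → P → P)
    (S : Set P) : Prop :=
  u ∈ S ∧ (∀ p ∈ S, ∀ q ∈ S, op p q ∈ S) ∧
  (∀ p ∈ S, ∃ q ∈ S, op p q = u ∧ op q p = u) ∧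
  (∀ p : P, ∀ x ∈ S, ∀ r, op p r = cop p x → r ∈ S)

/-- `I` is an ideal of the sub-brace `S` of the ambient brace: a subgroup of `(S, mul)`,
normal in `(S, mul)` and in `(S, circ)`, and a left ideal of `S`. -/
def IsIdealOfSub {G : Type*} (mul : G → G → G) (e : G) (inv : G → G)
    (circ : G → G → G) (cinv : G → G) (S I : Set G) : Prop :=
  I ⊆ S ∧ e ∈ I ∧
  (∀ x ∈ I, ∀ y ∈ I, mul x y ∈ I) ∧ (∀ x ∈ I, inv x ∈ I) ∧
  (∀ s ∈ S, ∀ x ∈ I, mul (mul s x) (inv s) ∈ I) ∧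
  (∀ s ∈ S, ∀ x ∈ I, circ (circ s x) (cinv s) ∈ I) ∧
  (∀ s ∈ S, ∀ x ∈ I, mul (inv s) (circ s x) ∈ I)

section Twist

open Function Equiv

variable {X Y : Type*} {R : X × X → X × X} {R' : Y × Y → Y × Y} {σ : X → Perm X} {τ : Y → Perm Y}

/-- The change of coordinates `(a, b) ↦ (a, σ_a b)` on `X × X`, in which a non-degenerate involutive
solution with first component `σ_a b` becomes the flip. -/
def drinfeldTwist (σ : X → Perm X) : X × X ≃ X × X :=
  (Equiv.refl X).prodShear σ

/-- The analogue `(a, b, c) ↦ (a, σ_a b, σ_a (σ_b c))` of `drinfeldTwist` on `X × X × X`. -/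
def drinfeldTwist₃ (σ : X → Perm X) : X × X × X ≃ X × X × X :=
  (Equiv.refl X).prodShear fun a ↦ (drinfeldTwist σ).trans ((σ a).prodCongr (σ a))

/-- The bijection `(a, b) ↦ (f a, τ_{f a}⁻¹ (f (σ_a b)))`: the coordinates of `drinfeldTwist σ`,
transported along `f`, are read as those of `drinfeldTwist τ`. -/
def drinfeldEquiv (σ : X → Perm X) (τ : Y → Perm Y) (f : X ≃ Y) : X × X ≃ Y × Y :=
  ((drinfeldTwist σ).trans (f.prodCongr f)).trans (drinfeldTwist τ).symm

lemma isInvolutiveSol_of_semiconj_swap (hR : Semiconj (drinfeldTwist σ) R Prod.swap) :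
    IsInvolutiveSol R := fun p ↦
  (drinfeldTwist σ).injective <| by rw [hR.eq, hR.eq, Prod.swap_swap]

lemma semiconj_drinfeldEquiv (hR : Semiconj (drinfeldTwist σ) R Prod.swap)
    (hR' : Semiconj (drinfeldTwist τ) R' Prod.swap) (f : X ≃ Y) :
    Semiconj (drinfeldEquiv σ τ f) R R' := fun p ↦
  (drinfeldTwist τ).injective <| by
    simp only [drinfeldEquiv, trans_apply, apply_symm_apply, hR.eq, hR'.eq]
    exact congrFun (Prod.map_comp_swap f f) _

lemma semiconj_drinfeldTwist₃_YB23 (hR : Semiconj (drinfeldTwist σ) R Prod.swap) :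
    Semiconj (drinfeldTwist₃ σ) (YB23 R) (YB23 Prod.swap) := fun p ↦
  congrArg (fun q ↦ (p.1, Prod.map (σ p.1) (σ p.1) q)) (hR p.2)

lemma semiconj_drinfeldTwist₃_YB12 (hR : Semiconj (drinfeldTwist σ) R Prod.swap)
    (hσ : ∀ p, σ (R p).1 * σ (R p).2 = σ p.1 * σ p.2) :
    Semiconj (drinfeldTwist₃ σ) (YB12 R) (YB12 Prod.swap) := by
  rintro ⟨a, b, c⟩
  have h₁₂ : ((R (a, b)).1, σ (R (a, b)).1 (R (a, b)).2) = (σ a b, a) := hR (a, b)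
  have h₃ : σ (R (a, b)).1 (σ (R (a, b)).2 c) = σ a (σ b c) := congr($(hσ (a, b)) c)
  rw [Prod.mk.injEq] at h₁₂
  exact Prod.ext h₁₂.1 (Prod.ext h₁₂.2 h₃)

lemma braid_swap : YB12 (Prod.swap (α := X)) ∘ YB23 Prod.swap ∘ YB12 Prod.swap =
    YB23 Prod.swap ∘ YB12 Prod.swap ∘ YB23 Prod.swap :=
  rfl

lemma isYBSolution_of_semiconj_swap (hR : Semiconj (drinfeldTwist σ) R Prod.swap)
    (hσ : ∀ p, σ (R p).1 * σ (R p).2 = σ p.1 * σ p.2) : IsYBSolution R := by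
  have h₁₂ := semiconj_drinfeldTwist₃_YB12 hR hσ
  have h₂₃ := semiconj_drinfeldTwist₃_YB23 hR
  refine ⟨Involutive.bijective (isInvolutiveSol_of_semiconj_swap hR), funext fun p ↦ ?_⟩
  apply (drinfeldTwist₃ σ).injective
  rw [(h₁₂.comp_right (h₂₃.comp_right h₁₂)).eq, (h₂₃.comp_right (h₁₂.comp_right h₂₃)).eq,
    braid_swap]

end Twist

/-- A brace in Rump's additive notation: `+` is the operation `·` of `IsBrace` and `*` its `∘`. -/
class LeftBrace (G : Type*) extends AddCommGroup G, Group G where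
  mul_add_eq (a b c : G) : a * (b + c) = a * b - a + a * c

namespace LeftBrace

open Equiv Function

variable {G : Type*} [LeftBrace G]

lemma mul_zero_eq (a : G) : a * 0 = a := by
  have h := mul_add_eq a 0 0
  rwa [add_zero, eq_comm, add_eq_right, sub_eq_zero] at h

lemma one_eq_zero : (1 : G) = 0 := by
  rw [← mul_zero_eq (1 : G), one_mul]

lemma mul_neg_eq (a b : G) : a * -b = a - a * b + a := by
  have h := mul_add_eq a b (-b)
  rw [add_neg_cancel, mul_zero_eq, ← sub_eq_iff_eq_add'] at h
  rw [← h, sub_sub_eq_add_sub, sub_add_eq_add_sub]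

/-- The action `λ_a b = -a + a * b` of the multiplicative group of a brace on its underlying set. -/
def lam : G →* Perm G :=
  MonoidHom.mk' (fun a ↦ (Equiv.mulLeft a).trans (Equiv.addLeft (-a))) fun a b ↦ by
    ext c
    change -(a * b) + a * b * c = -a + a * (-b + b * c)
    rw [mul_add_eq, mul_neg_eq, mul_assoc]
    abel

lemma lam_apply (a b : G) : lam a b = -a + a * b := rfl

lemma lam_eq_mul_add (a b : G) : lam a b = a * (a⁻¹ + b) := by
  rw [lam_apply, mul_add_eq, mul_inv_cancel, one_eq_zero, zero_sub]

/-- The solution `(a, b) ↦ (λ_a b, (λ_a b)⁻¹ * a * b)` attached to a brace. -/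
def solution (p : G × G) : G × G :=
  (lam p.1 p.2, (lam p.1 p.2)⁻¹ * p.1 * p.2)

lemma solution_fst_mul_snd (p : G × G) : (solution p).1 * (solution p).2 = p.1 * p.2 := by
  simp [solution, mul_assoc]

lemma solution_snd (a b : G) : (solution (a, b)).2 = (a⁻¹ + b)⁻¹ * b := by
  simp [solution, lam_eq_mul_add]

lemma semiconj_swap_solution : Semiconj (drinfeldTwist lam) (solution (G := G)) Prod.swap := by
  rintro ⟨a, b⟩
  have h : lam (solution (a, b)).1 (solution (a, b)).2 = a := by
    rw [lam_apply, solution_fst_mul_snd]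
    change -(-a + a * b) + a * b = a
    abel
  exact Prod.ext rfl h

lemma isYBSolution_solution : IsYBSolution (solution (G := G)) :=
  isYBSolution_of_semiconj_swap semiconj_swap_solution fun p ↦ by
    rw [← map_mul, solution_fst_mul_snd, map_mul]

lemma isInvolutiveSol_solution : IsInvolutiveSol (solution (G := G)) :=
  isInvolutiveSol_of_semiconj_swap semiconj_swap_solution

lemma isNonDegenerate_solution : IsNonDegenerate (solution (G := G)) := by
  refine ⟨fun a ↦ (lam a).bijective, fun b ↦ ?_⟩
  simp only [solution_snd]
  exact ((((Equiv.inv G).trans (Equiv.addRight b)).trans (Equiv.inv G)).trans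
    (Equiv.mulRight b)).bijective

end LeftBrace

section OfIsBrace

variable {G : Type*} {op : G → G → G} {e : G} {inv : G → G}

/-- The bundled form of `IsGroup`, in multiplicative notation. -/
abbrev IsGroup.toGroup (h : IsGroup op e inv) : Group G :=
  @Group.ofLeftAxioms G ⟨op⟩ ⟨inv⟩ ⟨e⟩ h.assoc h.one_op h.inv_op

/-- The bundled form of `IsGroup`, in additive notation. -/
abbrev IsGroup.toAddGroup (h : IsGroup op e inv) : AddGroup G :=
  @AddGroup.ofLeftAxioms G ⟨op⟩ ⟨inv⟩ ⟨e⟩ h.assoc h.one_op h.inv_op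

lemma IsGroup.of_op_inv (assoc : ∀ a b c, op (op a b) c = op a (op b c))
    (op_one : ∀ a, op a e = a) (op_inv : ∀ a, op a (inv a) = e) : IsGroup op e inv :=
  letI := @Group.ofRightAxioms G ⟨op⟩ ⟨inv⟩ ⟨e⟩ assoc op_one op_inv
  ⟨assoc, one_mul, op_one, inv_mul_cancel, op_inv⟩

variable {mul circ : G → G → G} {ce : G} {cinv : G → G}

/-- The bundled form of `IsBrace`. -/
abbrev IsBrace.toLeftBrace (h : IsBrace mul e inv circ ce cinv) : LeftBrace G :=
  { h.mul_group.toAddGroup, h.circ_group.toGroup with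
    add_comm := h.mul_comm
    mul_add_eq := h.compat }

end OfIsBrace

section PostBrace

variable {G : Type*} {mul circ tri : G → G → G} {e ce : G} {inv cinv dagger : G → G}

/-- The sub-adjacent operation `a ∗ b = a ∘ (a ⊳ b)` of a post-group. -/
def subAdjacent (circ tri : G → G → G) (a b : G) : G :=
  circ a (tri a b)

lemma IsPostGroup.tri_one (h : IsPostGroup circ ce cinv tri) (a : G) : tri a ce = ce :=
  letI := h.circ_group.toGroup
  map_one (MonoidHom.mk' (tri a) (h.tri_circ a))

lemma IsPostGroup.isGroup_subAdjacent (h : IsPostGroup circ ce cinv tri)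
    (hdagger : ∀ a, tri a (dagger a) = cinv a) : IsGroup (subAdjacent circ tri) ce dagger := by
  refine .of_op_inv (fun a b c ↦ ?_) (fun a ↦ ?_) (fun a ↦ ?_)
  · simp only [subAdjacent, h.weighted, h.tri_circ, h.circ_group.assoc]
  · rw [subAdjacent, h.tri_one, h.circ_group.op_one]
  · rw [subAdjacent, hdagger, h.circ_group.op_inv]

lemma IsPostBrace.isBrace_subAdjacent (h : IsPostBrace mul e inv circ ce cinv tri)
    (hdagger : ∀ a, tri a (dagger a) = cinv a) :
    IsBrace mul e inv (subAdjacent circ tri) ce dagger where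
  mul_group := h.brace.mul_group
  mul_comm := h.brace.mul_comm
  circ_group := h.post.isGroup_subAdjacent hdagger
  compat a b c := by simp only [subAdjacent, h.tri_mul, h.brace.compat]

end PostBrace

open LeftBrace in
theorem statement10_general {G H : Type*}
    {mul₁ circ₁ : G → G → G} {e₁ ce₁ : G} {inv₁ cinv₁ : G → G}
    {mul₂ circ₂ : H → H → H} {e₂ ce₂ : H} {inv₂ cinv₂ : H → H}
    (h₁ : IsBrace mul₁ e₁ inv₁ circ₁ ce₁ cinv₁) (h₂ : IsBrace mul₂ e₂ inv₂ circ₂ ce₂ cinv₂)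
    (f : G ≃ H) {lamInv : H → H → H}
    (hlamInv : ∀ a b, mul₂ (inv₂ a) (circ₂ a (lamInv a b)) = b)
    {R₁ : G × G → G × G} {R₂ : H × H → H × H} {ω : G × G → H × H}
    (hR₁ : ∀ a b, R₁ (a, b) = (mul₁ (inv₁ a) (circ₁ a b),
      circ₁ (circ₁ (cinv₁ (mul₁ (inv₁ a) (circ₁ a b))) a) b))
    (hR₂ : ∀ a b, R₂ (a, b) = (mul₂ (inv₂ a) (circ₂ a b),
      circ₂ (circ₂ (cinv₂ (mul₂ (inv₂ a) (circ₂ a b))) a) b))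
    (hω : ∀ a b, ω (a, b) = (f a, lamInv (f a) (f (mul₁ (inv₁ a) (circ₁ a b))))) :
    (IsYBSolution R₁ ∧ IsNonDegenerate R₁ ∧ IsInvolutiveSol R₁) ∧
    (IsYBSolution R₂ ∧ IsNonDegenerate R₂ ∧ IsInvolutiveSol R₂) ∧
    Function.Bijective ω ∧ ∀ p, ω (R₁ p) = R₂ (ω p) := by
  let _ := h₁.toLeftBrace
  let _ := h₂.toLeftBrace
  obtain rfl : R₁ = solution := funext fun p ↦ hR₁ p.1 p.2
  obtain rfl : R₂ = solution := funext fun p ↦ hR₂ p.1 p.2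
  obtain rfl : ω = drinfeldEquiv lam lam f := funext fun p ↦
    (hω p.1 p.2).trans <| Prod.ext rfl <| (Equiv.eq_symm_apply _).2 (hlamInv _ _)
  exact ⟨⟨isYBSolution_solution, isNonDegenerate_solution, isInvolutiveSol_solution⟩,
    ⟨isYBSolution_solution, isNonDegenerate_solution, isInvolutiveSol_solution⟩,
    Equiv.bijective _, semiconj_drinfeldEquiv semiconj_swap_solution semiconj_swap_solution f⟩

/-- A post-brace yields two non-degenerate involutive solutions `R₁`
(from the brace `(G, ·, ∘)`) and `R₂` (from the sub-adjacent brace `(G, ·, ∗)`) of the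
Yang-Baxter equation, which are Drinfel'd isomorphic via
`ω(a, b) = (a, (L▸_a)⁻¹ (a⁻¹ · (a ∘ b)))` where `a ▸ b = a⁻¹ · (a ∗ b)`. -/
theorem statement10 {G : Type*} (mul : G → G → G) (e : G) (inv : G → G)
    (circ : G → G → G) (ce : G) (cinv : G → G) (tri : G → G → G)
    (hPB : IsPostBrace mul e inv circ ce cinv tri)
    (star : G → G → G) (hstar : ∀ a b, star a b = circ a (tri a b))
    (triInv : G → G → G)
    (htriInv : ∀ a b, triInv a (tri a b) = b ∧ tri a (triInv a b) = b)
    (dagger : G → G) (hdagger : ∀ a, dagger a = triInv a (cinv a))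
    (lam : G → G → G) (hlam : ∀ a b, lam a b = mul (inv a) (star a b))
    (lamInv : G → G → G)
    (hlamInv : ∀ a b, lamInv a (lam a b) = b ∧ lam a (lamInv a b) = b)
    (R1 R2 : G × G → G × G)
    (hR1 : ∀ a b, R1 (a, b) = (mul (inv a) (circ a b),
      circ (circ (cinv (mul (inv a) (circ a b))) a) b))
    (hR2 : ∀ a b, R2 (a, b) = (mul (inv a) (star a b),
      star (star (dagger (mul (inv a) (star a b))) a) b))
    (ω : G × G → G × G)
    (hω : ∀ a b, ω (a, b) = (a, lamInv a (mul (inv a) (circ a b)))) :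
    (IsYBSolution R1 ∧ IsNonDegenerate R1 ∧ IsInvolutiveSol R1) ∧
    (IsYBSolution R2 ∧ IsNonDegenerate R2 ∧ IsInvolutiveSol R2) ∧
    Function.Bijective ω ∧ (∀ p, ω (R1 p) = R2 (ω p)) := by
  obtain rfl : star = subAdjacent circ tri := funext₂ hstar
  have hdagger' (a : G) : tri a (dagger a) = cinv a := by rw [hdagger, (htriInv a _).2]
  exact statement10_general hPB.brace (hPB.isBrace_subAdjacent hdagger') (Equiv.refl G)
    (fun a b ↦ by rw [← hlam, (hlamInv a b).2]) hR1 hR2 hω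
end

section
/- Let B : G → G be an enhanced Rota-Baxter operator on a two-sided brace (G,·,∘). Then b ∘ B(b) = B(b) · b for all b ∈ G. -/
/-- A skew left brace: a group `(G, mul)`, not necessarily abelian, and a group `(G, circ)` with
`a ∘ (b · c) = (a ∘ b) · a⁻¹ · (a ∘ c)`. The two units are separate parameters, as in `IsBrace`. -/
structure IsSkewBrace {G : Type*} (mul : G → G → G) (e : G) (inv : G → G)
    (circ : G → G → G) (ce : G) (cinv : G → G) : Prop where
  mul_group : IsGroup mul e inv
  circ_group : IsGroup circ ce cinv
  compat : ∀ a b c, circ a (mul b c) = mul (mul (circ a b) (inv a)) (circ a c)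

section

variable {G H : Type*}
  {mul circ : G → G → G} {e ce : G} {inv cinv : G → G}
  {mulH circH : H → H → H} {eH ceH : H} {invH cinvH : H → H}

lemma IsGroup.eq_one_of_op_self (hG : IsGroup mul e inv) {a : G} (ha : mul a a = a) : a = e :=
  calc a = mul (inv a) (mul a a) := by rw [← hG.assoc, hG.inv_op, hG.one_op]
    _ = e := by rw [ha, hG.inv_op]

lemma IsGroup.map_one (hG : IsGroup mul e inv) (hH : IsGroup mulH eH invH) {f : H → G}
    (hf : ∀ h k, mul (f h) (f k) = f (mulH h k)) : f eH = e :=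
  hG.eq_one_of_op_self (by rw [hf, hH.one_op])

lemma IsGroup.adC_self (hG : IsGroup circ ce cinv) (a : G) : adC circ cinv a a = a := by
  rw [adC, hG.assoc, hG.op_inv, hG.op_one]

lemma IsSkewBrace.circ_one_eq_one (hG : IsSkewBrace mul e inv circ ce cinv) : ce = e := by
  have inv_ce : e = inv ce := by
    simpa only [hG.mul_group.one_op, hG.mul_group.op_one, hG.circ_group.one_op]
      using hG.compat ce e e
  calc ce = mul ce (inv ce) := by rw [← inv_ce, hG.mul_group.op_one]
    _ = e := hG.mul_group.op_inv ce

lemma IsSkewBrace.one_circ (hG : IsSkewBrace mul e inv circ ce cinv) (a : G) : circ e a = a := by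
  rw [← hG.circ_one_eq_one, hG.circ_group.one_op]

lemma IsBrace.isSkewBrace (hG : IsBrace mul e inv circ ce cinv) :
    IsSkewBrace mul e inv circ ce cinv :=
  ⟨hG.mul_group, hG.circ_group, hG.compat⟩

lemma IsEnhancedRBTwoSided.isEnhancedRelRBO {B : G → G}
    (hB : IsEnhancedRBTwoSided mul circ cinv B) :
    IsEnhancedRelRBO mul circ mul circ (adC circ cinv) B :=
  ⟨hB.1.1, fun x a b => hB.2 a b x⟩

/-- The enhanced identity at the unit of `H`, which `B` sends to the unit of `G`. -/
lemma IsEnhancedRelRBO.circ_map (hG : IsGroup mul e inv)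
    (hH : IsSkewBrace mulH eH invH circH ceH cinvH) {Φ : G → H → H} {B : H → G}
    (hB : IsEnhancedRelRBO mul circ mulH circH Φ B) (a : G) (k : H) :
    circ a (B k) = mul (B (Φ a k)) a := by
  have map_one : B eH = e := hG.map_one hH.mul_group hB.1
  simpa only [map_one, hG.one_op, hH.one_circ] using hB.2 a eH k

theorem statement15_general (hG : IsSkewBrace mul e inv circ ce cinv) {B : G → G}
    (hB : IsEnhancedRelRBO mul circ mul circ (adC circ cinv) B) (b : G) :
    circ b (B b) = mul (B b) b :=
  calc circ b (B b) = mul (B (adC circ cinv b b)) b := hB.circ_map hG.mul_group hG b b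
    _ = mul (B b) b := by rw [hG.circ_group.adC_self]

end

/-- For an enhanced Rota-Baxter operator `B` on a two-sided brace,
`b ∘ B(b) = B(b) · b` for all `b`. -/
theorem statement15 {G : Type*} (mul : G → G → G) (e : G) (inv : G → G)
    (circ : G → G → G) (ce : G) (cinv : G → G)
    (hG : IsTwoSidedBrace mul e inv circ ce cinv)
    (B : G → G) (hB : IsEnhancedRBTwoSided mul circ cinv B) :
    ∀ b, circ b (B b) = mul (B b) b :=
  statement15_general hG.1.isSkewBrace hB.isEnhancedRelRBO
end
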